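/- Let Q be the quiver of type Ẽ_7 with vertex set {1,…,8} and arrows 1→2, 2→3, 3→8, 4→5, 5→6, 6→8, 7→8. Then there exists an element Y of ℚ(x_1,…,x_8) such that for every extending vertex i ∈ {1, 4} and every j ≥ 0 one has Y·X^i_{j+12} = X^i_j + X^i_{j+24}. -/

import Mathlib

/-- Arrow multiplicities of the quiver of type Ẽ_7 with arrows
`1→2, 2→3, 3→8, 4→5, 5→6, 6→8, 7→8`; the vertex labelled `k ∈ {1,…,8}` corresponds to
the index `k−1` of `Fin 8`. -/
def multE7 (s t : Fin 8) : ℕ :=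
  if (s = 0 ∧ t = 1) ∨ (s = 1 ∧ t = 2) ∨ (s = 2 ∧ t = 7) ∨ (s = 3 ∧ t = 4) ∨
     (s = 4 ∧ t = 5) ∨ (s = 5 ∧ t = 7) ∨ (s = 6 ∧ t = 7) then 1 else 0

/-!
Write `a` and `d` for the frieze sequences at the extending vertices `1` and `4`. Along each branch
of the quiver the quadratic recursion linearises, and these linear relations show that
`(a j + a (j + 6)) / d (j + 3)` and `(d (j + 2) + d (j + 8)) / a (j + 5)` are equal; so they define
a sequence `k` of period `4` (the quasi-simples of the tube of rank `4`). Hence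
`a j, d (j + 3), a (j + 6), d (j + 9), …` solves the second order linear recurrence
`w n + w (n + 2) = k (j + n) * w (n + 1)`, whose monodromy over one period is a matrix of
determinant `1`. The required `Y` is its trace, which is independent of the starting point `j`, and
the relation is the Cayley–Hamilton theorem.
-/

section Monodromy

variable {R : Type*} [CommRing R]

/-- The transfer matrix over `n` steps of the recurrence `w m + w (m + 2) = k m * w (m + 1)`: it
maps `(w 0, w 1)` to `(w n, w (n + 1))`. When `k` has period `n`, it is the monodromy of the
recurrence. -/
def transferMatrix (k : ℕ → R) : ℕ → Matrix (Fin 2) (Fin 2) R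
  | 0 => 1
  | n + 1 => !![0, 1; -1, k n] * transferMatrix k n

theorem transferMatrix_succ' (k : ℕ → R) (n : ℕ) :
    transferMatrix k (n + 1) = transferMatrix (fun m => k (m + 1)) n * !![0, 1; -1, k 0] := by
  induction n with
  | zero => simp [transferMatrix]
  | succ n ih => rw [transferMatrix, ih, transferMatrix, Matrix.mul_assoc]

theorem det_transferMatrix (k : ℕ → R) (n : ℕ) : (transferMatrix k n).det = 1 := by
  induction n with
  | zero => exact Matrix.det_one
  | succ n ih => rw [transferMatrix, Matrix.det_mul, ih, Matrix.det_fin_two_of]; ring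

theorem transferMatrix_mulVec {k w : ℕ → R} (hw : ∀ n, k n * w (n + 1) = w n + w (n + 2))
    (n : ℕ) : (transferMatrix k n).mulVec ![w 0, w 1] = ![w n, w (n + 1)] := by
  induction n with
  | zero => exact Matrix.one_mulVec _
  | succ n ih =>
    have hstep : w (n + 1 + 1) = -w n + k n * w (n + 1) := by linear_combination -hw n
    rw [transferMatrix, ← Matrix.mulVec_mulVec, ih, hstep]
    ext i
    fin_cases i <;> simp [Matrix.mulVec]

theorem trace_transferMatrix_shift {k : ℕ → R} {N : ℕ} (hk : k.Periodic N) (s : ℕ) :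
    (transferMatrix (fun n => k (n + s)) N).trace = (transferMatrix k N).trace := by
  induction s with
  | zero => rfl
  | succ s ih =>
    rw [← ih]
    cases N with
    | zero => rfl
    | succ N =>
      have hper : k (N + (s + 1)) = k (0 + s) := by
        rw [← hk (0 + s)]
        congr 1
        ring
      rw [transferMatrix_succ' fun n => k (n + s), Matrix.trace_mul_comm, transferMatrix, hper]
      simp only [add_assoc, add_comm s 1]

theorem trace_smul_eq_sq_add_one {P : Matrix (Fin 2) (Fin 2) R} (hP : P.det = 1) :
    P.trace • P = P ^ 2 + 1 := by
  nontriviality R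
  have h := P.aeval_self_charpoly
  simp only [Matrix.charpoly_fin_two, hP, map_add, map_sub, map_pow, map_mul, map_one,
    Polynomial.aeval_X, Polynomial.aeval_C, ← Algebra.smul_def] at h
  rw [sub_add_eq_add_sub, sub_eq_zero] at h
  exact h.symm

theorem trace_transferMatrix_mul {k w : ℕ → R} {N : ℕ} (hk : k.Periodic N)
    (hw : ∀ n, k n * w (n + 1) = w n + w (n + 2)) :
    (transferMatrix k N).trace * w N = w 0 + w (N + N) := by
  set P := transferMatrix k N
  have hfirst : P.mulVec ![w 0, w 1] = ![w N, w (N + 1)] := transferMatrix_mulVec hw N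
  have hsecond : P.mulVec ![w N, w (N + 1)] = ![w (N + N), w (N + 1 + N)] := by
    have hwN : ∀ n, k n * w (n + 1 + N) = w (n + N) + w (n + 2 + N) := fun n => by
      rw [← hk n, add_right_comm n 1 N, add_right_comm n 2 N]
      exact hw (n + N)
    simpa only [zero_add, add_comm 1 N] using
      transferMatrix_mulVec (w := fun n => w (n + N)) hwN N
  have hcayley : P.trace • P = P ^ 2 + 1 := trace_smul_eq_sq_add_one (det_transferMatrix k N)
  have h := congrFun (congrArg (Matrix.mulVec · ![w 0, w 1]) hcayley) 0
  simp only [Matrix.smul_mulVec, Matrix.add_mulVec, Matrix.one_mulVec, sq,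
    ← Matrix.mulVec_mulVec, hfirst, hsecond] at h
  simpa [add_comm] using h

end Monodromy

section Exchange

variable {R : Type*} [CommRing R] [IsDomain R]

/-- Linearity propagates along a branch: of the two exchange relations `hu` and `hv` at adjacent
vertices, the second becomes linear as soon as the first one is. -/
theorem eq_mul_sub_of_exchange {t u u' v v' w α : R} (hu' : u' ≠ 0) (hu : u' * u = 1 + t * v)
    (hv : v' * v = 1 + u' * w) (hlin : v' = α * u' - t) : w = α * v - u := by
  apply mul_left_cancel₀ hu'
  linear_combination hu - hv + v * hlin

end Exchange

/-- The frieze recursion along a branch `• → • → • → ⬤` carrying the nowhere vanishing sequences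
`a`, `b`, `c` and ending in a vertex that carries `h`, whose own recursion is left open. -/
structure IsFriezeBranch {R : Type*} [CommSemiring R] (a b c h : ℕ → R) : Prop where
  exchange_a : ∀ j, a (j + 1) * a j = 1 + b j
  exchange_b : ∀ j, b (j + 1) * b j = 1 + a (j + 1) * c j
  exchange_c : ∀ j, c (j + 1) * c j = 1 + b (j + 1) * h j
  a_ne_zero : ∀ j, a j ≠ 0
  b_ne_zero : ∀ j, b j ≠ 0
  c_ne_zero : ∀ j, c j ≠ 0

namespace IsFriezeBranch

variable {R : Type*} [CommRing R] [IsDomain R] {a b c h : ℕ → R}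

theorem c_eq_right (B : IsFriezeBranch a b c h) (j : ℕ) : c j = a (j + 2) * b j - a j :=
  eq_mul_sub_of_exchange (t := 1) (B.a_ne_zero (j + 1)) (by linear_combination B.exchange_a j)
    (B.exchange_b j) (by linear_combination -B.exchange_a (j + 1))

theorem c_eq_left (B : IsFriezeBranch a b c h) (j : ℕ) : c j = a j * b (j + 1) - a (j + 2) :=
  eq_mul_sub_of_exchange (t := 1) (v := b (j + 1)) (v' := b j) (B.a_ne_zero (j + 1))
    (by linear_combination B.exchange_a (j + 1)) (by linear_combination B.exchange_b j)
    (by linear_combination -B.exchange_a j)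

theorem h_eq_right (B : IsFriezeBranch a b c h) (j : ℕ) : h j = a (j + 3) * c j - b j :=
  eq_mul_sub_of_exchange (B.b_ne_zero (j + 1)) (B.exchange_b j) (B.exchange_c j)
    (B.c_eq_right (j + 1))

theorem h_eq_left (B : IsFriezeBranch a b c h) (j : ℕ) : h j = a j * c (j + 1) - b (j + 2) :=
  eq_mul_sub_of_exchange (t := a (j + 2)) (B.b_ne_zero (j + 1))
    (by linear_combination B.exchange_b (j + 1)) (by linear_combination B.exchange_c j)
    (B.c_eq_left j)

theorem b_mul_c (B : IsFriezeBranch a b c h) (j : ℕ) :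
    b j * c (j + 1) = a (j + 1) * h j + a (j + 3) := by
  linear_combination b j * B.c_eq_right (j + 1) - a (j + 1) * B.h_eq_right j +
    a (j + 3) * B.exchange_b j

theorem c_mul_b (B : IsFriezeBranch a b c h) (j : ℕ) :
    c j * b (j + 2) = a (j + 2) * h j + a j := by
  linear_combination b (j + 2) * B.c_eq_left j - a (j + 2) * B.h_eq_left j +
    a j * B.exchange_b (j + 1)

end IsFriezeBranch

/-- Nowhere vanishing solutions of the frieze recursion of the quiver of type Ẽ_7: the branches
`1→2→3→8` and `4→5→6→8` carry `a, b, c` and `d, e, f`, the short branch `7→8` carries `g`, and the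
central vertex `8` carries `h`. -/
structure IsFriezeE7Tilde {R : Type*} [CommSemiring R] (a b c d e f g h : ℕ → R) : Prop where
  branch : IsFriezeBranch a b c h
  branch' : IsFriezeBranch d e f h
  exchange_g : ∀ j, g (j + 1) * g j = 1 + h j
  exchange_h : ∀ j, h (j + 1) * h j = 1 + c (j + 1) * f (j + 1) * g (j + 1)
  g_ne_zero : ∀ j, g j ≠ 0
  h_ne_zero : ∀ j, h j ≠ 0

namespace IsFriezeE7Tilde

theorem swap {R : Type*} [CommSemiring R] {a b c d e f g h : ℕ → R}
    (H : IsFriezeE7Tilde a b c d e f g h) : IsFriezeE7Tilde d e f a b c g h where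
  branch := H.branch'
  branch' := H.branch
  exchange_g := H.exchange_g
  exchange_h j := by rw [H.exchange_h, mul_comm (c _)]
  g_ne_zero := H.g_ne_zero
  h_ne_zero := H.h_ne_zero

section Domain

variable {R : Type*} [CommRing R] [IsDomain R] {a b c d e f g h : ℕ → R}

theorem f_mul_g_eq_right (H : IsFriezeE7Tilde a b c d e f g h) (j : ℕ) :
    f (j + 1) * g (j + 1) = a (j + 4) * h j - c j :=
  eq_mul_sub_of_exchange (H.branch.c_ne_zero (j + 1)) (H.branch.exchange_c j)
    (by linear_combination H.exchange_h j) (H.branch.h_eq_right (j + 1))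

theorem f_mul_g_eq_left (H : IsFriezeE7Tilde a b c d e f g h) (j : ℕ) :
    f (j + 1) * g (j + 1) = a j * h (j + 1) - c (j + 2) :=
  eq_mul_sub_of_exchange (t := b (j + 2)) (H.branch.c_ne_zero (j + 1))
    (by linear_combination H.branch.exchange_c (j + 1)) (by linear_combination H.exchange_h j)
    (H.branch.h_eq_left j)

theorem c_mul_f_eq_right (H : IsFriezeE7Tilde a b c d e f g h) (j : ℕ) :
    c (j + 1) * f (j + 1) = g (j + 2) * h j - g j :=
  eq_mul_sub_of_exchange (t := 1) (v := h j) (v' := h (j + 1)) (H.g_ne_zero (j + 1))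
    (by linear_combination H.exchange_g j) (by linear_combination H.exchange_h j)
    (by linear_combination -H.exchange_g (j + 1))

theorem c_mul_f_eq_left (H : IsFriezeE7Tilde a b c d e f g h) (j : ℕ) :
    c (j + 1) * f (j + 1) = g j * h (j + 1) - g (j + 2) :=
  eq_mul_sub_of_exchange (t := 1) (v := h (j + 1)) (v' := h j) (H.g_ne_zero (j + 1))
    (by linear_combination H.exchange_g (j + 1)) (by linear_combination H.exchange_h j)
    (by linear_combination -H.exchange_g j)

theorem h_mul_d (H : IsFriezeE7Tilde a b c d e f g h) (j : ℕ) :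
    h (j + 2) * d j = a (j + 5) * g (j + 3) + f (j + 2) * b (j + 2) := by
  apply mul_left_cancel₀ (H.h_ne_zero (j + 1))
  linear_combination -h (j + 2) * H.swap.f_mul_g_eq_left j +
    g (j + 3) * H.f_mul_g_eq_right (j + 1) + f (j + 2) * H.branch.exchange_c (j + 1) -
    f (j + 2) * H.exchange_g (j + 2) - c (j + 1) * H.c_mul_f_eq_left (j + 1)

theorem h_mul_a (H : IsFriezeE7Tilde a b c d e f g h) (j : ℕ) :
    h j * a (j + 5) = d j * g j + c (j + 1) * e (j + 2) := by
  apply mul_left_cancel₀ (H.h_ne_zero (j + 1))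
  linear_combination -h j * H.f_mul_g_eq_right (j + 1) + g j * H.swap.f_mul_g_eq_left j +
    c (j + 1) * H.branch'.exchange_c (j + 1) - c (j + 1) * H.exchange_g j -
    f (j + 2) * H.c_mul_f_eq_right j

theorem c_mul_d (H : IsFriezeE7Tilde a b c d e f g h) (j : ℕ) :
    c (j + 3) * d j = a (j + 5) * d (j + 6) + a (j + 3) * f (j + 2) := by
  apply mul_left_cancel₀ (H.h_ne_zero (j + 2))
  linear_combination c (j + 3) * H.h_mul_d j + a (j + 5) * H.swap.f_mul_g_eq_right (j + 2) +
    f (j + 2) * H.branch.b_mul_c (j + 2)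

theorem f_mul_a (H : IsFriezeE7Tilde a b c d e f g h) (j : ℕ) :
    f (j + 3) * a (j + 8) = d (j + 3) * a (j + 2) + d (j + 5) * c (j + 4) := by
  apply mul_left_cancel₀ (H.h_ne_zero (j + 3))
  linear_combination f (j + 3) * H.h_mul_a (j + 3) + d (j + 3) * H.f_mul_g_eq_left (j + 2) +
    c (j + 4) * H.branch'.c_mul_b (j + 3)

theorem d_mul_add_eq_a_mul_add (H : IsFriezeE7Tilde a b c d e f g h) (j : ℕ) :
    d (j + 5) * (d j + d (j + 6)) = a (j + 3) * (a (j + 2) + a (j + 8)) := by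
  have hd : c (j + 3) * (d j + d (j + 6)) = a (j + 3) * (b (j + 4) * d (j + 6) + f (j + 2)) := by
    linear_combination H.c_mul_d j + d (j + 6) * H.branch.c_eq_left (j + 3)
  have ha : f (j + 3) * (a (j + 2) + a (j + 8)) =
      d (j + 5) * (e (j + 3) * a (j + 2) + c (j + 4)) := by
    linear_combination H.f_mul_a j + a (j + 2) * H.branch'.c_eq_right (j + 3)
  have hcross : f (j + 3) * (b (j + 4) * d (j + 6) + f (j + 2)) =
      c (j + 3) * (e (j + 3) * a (j + 2) + c (j + 4)) := by
    -- both sides are `1 + b (j + 4) * (h (j + 3) + e (j + 3)) + e (j + 3) * h (j + 2)`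
    linear_combination -b (j + 4) * H.branch'.h_eq_right (j + 3) +
      e (j + 3) * H.branch.h_eq_left (j + 2) + H.branch'.exchange_c (j + 2) -
      H.branch.exchange_c (j + 3)
  apply mul_left_cancel₀ (mul_ne_zero (H.branch.c_ne_zero (j + 3)) (H.branch'.c_ne_zero (j + 3)))
  linear_combination d (j + 5) * f (j + 3) * hd - a (j + 3) * c (j + 3) * ha +
    d (j + 5) * a (j + 3) * hcross

end Domain

/-- The sequence `a j, d (j + 3), a (j + 6), d (j + 9), …`, to be shown to solve a second order
linear recurrence with coefficients of period `4`. -/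
def interlace {α : Type*} (a d : ℕ → α) (j n : ℕ) : α :=
  if Even n then a (j + 3 * n) else d (j + 3 * n)

section Field

variable {F : Type*} [Field F] {a b c d e f g h : ℕ → F}

/-- The element `(a j + a (j + 6)) / d (j + 3)`, which for the frieze sequences `a`, `d` at the two
extending vertices is attached to a quasi-simple of the tube of rank `4`. -/
def quasiSimple (a d : ℕ → F) (j : ℕ) : F := (a j + a (j + 6)) / d (j + 3)

theorem quasiSimple_swap (H : IsFriezeE7Tilde a b c d e f g h) (j : ℕ) :
    quasiSimple d a j = quasiSimple a d (j + 2) := by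
  rw [quasiSimple, quasiSimple, div_eq_div_iff (H.branch.a_ne_zero _) (H.branch'.a_ne_zero _)]
  linear_combination H.d_mul_add_eq_a_mul_add j

theorem quasiSimple_periodic (H : IsFriezeE7Tilde a b c d e f g h) :
    (quasiSimple a d).Periodic 4 := fun j =>
  (H.quasiSimple_swap (j + 2)).symm.trans (H.swap.quasiSimple_swap j).symm

theorem quasiSimple_mul {j : ℕ} (hd : d (j + 3) ≠ 0) :
    quasiSimple a d j * d (j + 3) = a j + a (j + 6) :=
  div_mul_cancel₀ _ hd

theorem quasiSimple_mul_interlace (H : IsFriezeE7Tilde a b c d e f g h) (j n : ℕ) :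
    quasiSimple a d (n + j) * interlace a d j (n + 1) =
      interlace a d j n + interlace a d j (n + 2) := by
  obtain ⟨m, rfl | rfl⟩ := n.even_or_odd'
  · have hper : quasiSimple a d (2 * m + j) = quasiSimple a d (j + 6 * m) := by
      rw [← H.quasiSimple_periodic.nat_mul m]
      congr 1
      push_cast
      ring
    have hmul := quasiSimple_mul (a := a) (H.branch'.a_ne_zero (j + 6 * m + 3))
    rw [hper]
    simpa [interlace, parity_simps, mul_add, ← mul_assoc, ← add_assoc] using hmul
  · have hper : quasiSimple a d (2 * m + 1 + j) = quasiSimple d a (j + 6 * m + 3) := by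
      rw [H.quasiSimple_swap, ← H.quasiSimple_periodic.nat_mul (m + 1)]
      congr 1
      push_cast
      ring
    have hmul := quasiSimple_mul (a := d) (H.branch.a_ne_zero (j + 6 * m + 3 + 3))
    rw [hper]
    simpa [interlace, parity_simps, mul_add, ← mul_assoc, ← add_assoc] using hmul

theorem trace_mul_a (H : IsFriezeE7Tilde a b c d e f g h) (j : ℕ) :
    (transferMatrix (quasiSimple a d) 4).trace * a (j + 12) = a j + a (j + 24) := by
  rw [← trace_transferMatrix_shift H.quasiSimple_periodic j]
  have hper : Function.Periodic (fun n => quasiSimple a d (n + j)) 4 :=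
    H.quasiSimple_periodic.add_const j
  simpa [interlace, parity_simps] using
    trace_transferMatrix_mul hper (H.quasiSimple_mul_interlace j)

theorem trace_mul_d (H : IsFriezeE7Tilde a b c d e f g h) (j : ℕ) :
    (transferMatrix (quasiSimple a d) 4).trace * d (j + 12) = d j + d (j + 24) := by
  rw [← trace_transferMatrix_shift H.quasiSimple_periodic 2, ← funext H.quasiSimple_swap]
  exact H.swap.trace_mul_a j

end Field

end IsFriezeE7Tilde

/-- The elements `p / q` of `L` with `p`, `q` in the ring `R` both sent to positive elements by `φ`.
Unlike the nonzero elements of `L`, they are stable under `z ↦ 1 + z`, so that frieze sequences stay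
among them. -/
def positiveQuotients {R K : Type*} (L : Type*) [CommSemiring R] [CommSemiring L] [Algebra R L]
    [Semiring K] [PartialOrder K] [IsStrictOrderedRing K] (φ : R →+* K) : Submonoid L where
  carrier := {z | ∃ p q : R, 0 < φ p ∧ 0 < φ q ∧ z * algebraMap R L q = algebraMap R L p}
  one_mem' := ⟨1, 1, by simp, by simp, by simp⟩
  mul_mem' := by
    rintro y z ⟨p, q, hp, hq, hy⟩ ⟨p', q', hp', hq', hz⟩
    refine ⟨p * p', q * q', by simpa using mul_pos hp hp', by simpa using mul_pos hq hq', ?_⟩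
    rw [map_mul, map_mul, ← hy, ← hz, mul_mul_mul_comm]

namespace positiveQuotients

variable {R K L : Type*} [CommSemiring R] [CommSemiring L] [Algebra R L]
  [Semiring K] [PartialOrder K] [IsStrictOrderedRing K] {φ : R →+* K} {y z : L}

theorem algebraMap_mem {p : R} (hp : 0 < φ p) : algebraMap R L p ∈ positiveQuotients L φ :=
  ⟨p, 1, hp, by simp, by simp⟩

theorem one_add_mem (hz : z ∈ positiveQuotients L φ) : 1 + z ∈ positiveQuotients L φ := by
  obtain ⟨p, q, hp, hq, h⟩ := hz
  refine ⟨q + p, q, by simpa using add_pos hq hp, hq, ?_⟩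
  rw [map_add, ← h, add_mul, one_mul]

theorem mem_of_mul_mem (hyz : y * z ∈ positiveQuotients L φ) (hz : z ∈ positiveQuotients L φ) :
    y ∈ positiveQuotients L φ := by
  obtain ⟨p', q', hp', hq', h'⟩ := hyz
  obtain ⟨p, q, hp, hq, h⟩ := hz
  refine ⟨p' * q, q' * p, by simpa using mul_pos hp' hq, by simpa using mul_pos hq' hp, ?_⟩
  rw [map_mul, map_mul, ← h, ← h']
  ring

theorem ne_zero [FaithfulSMul R L] (hz : z ∈ positiveQuotients L φ) : z ≠ 0 := by
  rintro rfl
  obtain ⟨p, q, hp, -, h⟩ := hz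
  rw [zero_mul, eq_comm, FaithfulSMul.algebraMap_eq_zero_iff] at h
  simp [h] at hp

end positiveQuotients

/-- The frieze recursion of the finite quiver with vertex set `V` and `mult s t` arrows `s → t`. -/
def IsFrieze {V R : Type*} [Fintype V] [CommSemiring R] (mult : V → V → ℕ) (X : V → ℕ → R) :
    Prop :=
  ∀ v j, X v (j + 1) * X v j =
    1 + (∏ s, X s (j + 1) ^ mult s v) * ∏ d, X d j ^ mult v d

namespace IsFrieze

variable {V : Type*} [Fintype V] {mult : V → V → ℕ}

theorem mem_positiveQuotients {R K L : Type*} [CommSemiring R] [CommSemiring L] [Algebra R L]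
    [Semiring K] [PartialOrder K] [IsStrictOrderedRing K] {φ : R →+* K} {X : V → ℕ → L}
    (hX : IsFrieze mult X) (hmult : WellFounded fun s t => mult s t ≠ 0)
    (hX0 : ∀ v, X v 0 ∈ positiveQuotients L φ) (v : V) (j : ℕ) :
    X v j ∈ positiveQuotients L φ := by
  induction j generalizing v with
  | zero => exact hX0 v
  | succ j ih =>
    induction v using hmult.induction with
    | _ v ihv =>
      refine positiveQuotients.mem_of_mul_mem ?_ (ih v)
      rw [hX v j]
      refine positiveQuotients.one_add_mem (mul_mem (prod_mem fun s _ => ?_)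
        (prod_mem fun d _ => pow_mem (ih d) _))
      by_cases hs : mult s v = 0
      · rw [hs, pow_zero]
        exact one_mem _
      · exact pow_mem (ihv s hs) _

theorem ne_zero_of_eq_X {k : Type*} [CommRing k] [LinearOrder k] [IsStrictOrderedRing k]
    {X : V → ℕ → FractionRing (MvPolynomial V k)} (hX : IsFrieze mult X)
    (hmult : WellFounded fun s t => mult s t ≠ 0)
    (hX0 : ∀ v, X v 0 = algebraMap _ _ (MvPolynomial.X v : MvPolynomial V k)) (v : V) (j : ℕ) :
    X v j ≠ 0 := by
  refine positiveQuotients.ne_zero (φ := MvPolynomial.eval (1 : V → k))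
    (hX.mem_positiveQuotients hmult (fun v => ?_) v j)
  rw [hX0]
  exact positiveQuotients.algebraMap_mem (by simp)

theorem isFriezeE7Tilde {R : Type*} [CommSemiring R] {X : Fin 8 → ℕ → R}
    (hX : IsFrieze multE7 X) (hX_ne : ∀ v j, X v j ≠ 0) :
    IsFriezeE7Tilde (X 0) (X 1) (X 2) (X 3) (X 4) (X 5) (X 6) (X 7) where
  branch :=
    { exchange_a j := by simpa [multE7, Fin.prod_univ_eight] using hX 0 j
      exchange_b j := by simpa [multE7, Fin.prod_univ_eight] using hX 1 j
      exchange_c j := by simpa [multE7, Fin.prod_univ_eight] using hX 2 j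
      a_ne_zero := hX_ne 0
      b_ne_zero := hX_ne 1
      c_ne_zero := hX_ne 2 }
  branch' :=
    { exchange_a j := by simpa [multE7, Fin.prod_univ_eight] using hX 3 j
      exchange_b j := by simpa [multE7, Fin.prod_univ_eight] using hX 4 j
      exchange_c j := by simpa [multE7, Fin.prod_univ_eight] using hX 5 j
      a_ne_zero := hX_ne 3
      b_ne_zero := hX_ne 4
      c_ne_zero := hX_ne 5 }
  exchange_g j := by simpa [multE7, Fin.prod_univ_eight] using hX 6 j
  exchange_h j := by simpa [multE7, Fin.prod_univ_eight] using hX 7 j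
  g_ne_zero := hX_ne 6
  h_ne_zero := hX_ne 7

end IsFrieze

theorem wellFounded_multE7 : WellFounded fun s t => multE7 s t ≠ 0 :=
  Subrelation.wf (r := (· < ·)) (fun {s t} => by revert s t; decide) wellFounded_lt

theorem stmt_17_general {F : Type*} [Field F] {X : Fin 8 → ℕ → F} (hX : IsFrieze multE7 X)
    (hX_ne : ∀ v j, X v j ≠ 0) :
    ∃ Y : F, ∀ i : Fin 8, (i = 0 ∨ i = 3) →
      ∀ j : ℕ, Y * X i (j + 12) = X i j + X i (j + 24) := by
  have H := hX.isFriezeE7Tilde hX_ne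
  refine ⟨(transferMatrix (IsFriezeE7Tilde.quasiSimple (X 0) (X 3)) 4).trace, ?_⟩
  rintro i (rfl | rfl)
  · exact H.trace_mul_a
  · exact H.trace_mul_d

/-- for the above quiver of type Ẽ_7, there is an element `Y` of
`ℚ(x_1,…,x_8)` such that for every extending vertex `i ∈ {1,4}` (indices `{0,3}` of
`Fin 8`) and every `j ≥ 0` one has `Y·X^i_{j+12} = X^i_j + X^i_{j+24}`. -/
theorem stmt_17
    (X : Fin 8 → ℕ → FractionRing (MvPolynomial (Fin 8) ℚ))
    (hX0 : ∀ v, X v 0 = algebraMap (MvPolynomial (Fin 8) ℚ)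
      (FractionRing (MvPolynomial (Fin 8) ℚ)) (MvPolynomial.X v))
    (hXrec : ∀ v (j : ℕ), X v (j+1) * X v j =
      1 + (∏ s : Fin 8, X s (j+1) ^ multE7 s v) * (∏ d : Fin 8, X d j ^ multE7 v d)) :
    ∃ Y : FractionRing (MvPolynomial (Fin 8) ℚ),
      ∀ i : Fin 8, (i = 0 ∨ i = 3) →
        ∀ j : ℕ, Y * X i (j + 12) = X i j + X i (j + 24) :=
  stmt_17_general hXrec (IsFrieze.ne_zero_of_eq_X hXrec wellFounded_multE7 hX0)
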